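/- arXiv:1707.02002 — 2 statements merged into one kernel-verified Lean document; each statement's English description precedes it below -/
import Mathlib

section
/- Let T be a tree on n vertices and v ∈ V(T). Then n−1 ≤ (2n−1)·D_T(v) − 2·W(T) ≤ n(n−1)(4n−5)/6. The lower bound holds with equality if and only if T is the star S_n with v as its center, and the upper bound holds with equality if and only if T is the path P_n with v as one of its end vertices. -/
open SimpleGraph Finset

attribute [local instance] Classical.propDecidable

variable {V : Type*}

/-- Degree of a vertex as a real number. -/
noncomputable def degR [Fintype V] (G : SimpleGraph V) (x : V) : ℝ :=
  ((Finset.univ.filter fun y => G.Adj x y).card : ℝ)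

/-- Number of edges of a graph. -/
noncomputable def esize (G : SimpleGraph V) : ℕ := Nat.card G.edgeSet

/-- Dirichlet energy of a potential. -/
noncomputable def energyFn [Fintype V] (G : SimpleGraph V) (φ : V → ℝ) : ℝ :=
  (1/2) * ∑ u, ∑ v, if G.Adj u v then (φ u - φ v)^2 else 0

/-- Effective resistance between two vertices (unit resistors on edges),
via the Dirichlet variational principle: the reciprocal of the minimal energy
of a potential with value 1 at `x` and 0 at `y`. -/
noncomputable def eres [Fintype V] (G : SimpleGraph V) (x y : V) : ℝ :=
  (sInf {e : ℝ | ∃ φ : V → ℝ, φ x = 1 ∧ φ y = 0 ∧ e = energyFn G φ})⁻¹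

/-- The transition matrix of the simple random walk, killed at `y`. -/
noncomputable def hitMat [Fintype V] (G : SimpleGraph V) (y : V) : Matrix V V ℝ :=
  Matrix.of fun u v => if v = y then 0 else if G.Adj u v then (degR G u)⁻¹ else 0

/-- Expected hitting time `H_{xy}` of the simple random walk from `x` to `y`,
expressed as the sum of the survival probabilities of the walk killed at `y`. -/
noncomputable def hitting [Fintype V] (G : SimpleGraph V) (x y : V) : ℝ :=
  if x = y then 0 else ∑' k : ℕ, ∑ z, (hitMat G y ^ k) x z

/-- Resistance-centrality `R(x)`. -/
noncomputable def Rres [Fintype V] (G : SimpleGraph V) (x : V) : ℝ := ∑ y, eres G x y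

/-- Weighted resistance-centrality `R^w(x)`. -/
noncomputable def Rw [Fintype V] (G : SimpleGraph V) (x : V) : ℝ :=
  ∑ y, degR G y * eres G x y

/-- Kirchhoff index `Kf(G)`. -/
noncomputable def Kf [Fintype V] (G : SimpleGraph V) : ℝ :=
  (1/2) * ∑ x, ∑ y, eres G x y

/-- Additive degree-Kirchhoff index `Kf⁺(G)`. -/
noncomputable def KfPlus [Fintype V] (G : SimpleGraph V) : ℝ :=
  (1/2) * ∑ x, ∑ y, (degR G x + degR G y) * eres G x y

/-- Multiplicative degree-Kirchhoff index `Kf*(G)`. -/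
noncomputable def KfStar [Fintype V] (G : SimpleGraph V) : ℝ :=
  (1/2) * ∑ x, ∑ y, degR G x * degR G y * eres G x y

/-- Cover cost `CC(x) = Σ_y H_{xy}`. -/
noncomputable def coverCost [Fintype V] (G : SimpleGraph V) (x : V) : ℝ :=
  ∑ y, hitting G x y

/-- Reverse cover cost `RC(x) = Σ_y H_{yx}`. -/
noncomputable def reverseCoverCost [Fintype V] (G : SimpleGraph V) (x : V) : ℝ :=
  ∑ y, hitting G y x

/-- Centrality (transmission) `D(x) = Σ_y d(x,y)`. -/
noncomputable def Dcent [Fintype V] (G : SimpleGraph V) (x : V) : ℝ :=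
  ∑ y, (G.dist x y : ℝ)

/-- Weighted centrality `D^w(x) = Σ_y deg(y)·d(x,y)`. -/
noncomputable def Dw [Fintype V] (G : SimpleGraph V) (x : V) : ℝ :=
  ∑ y, degR G y * (G.dist x y : ℝ)

/-- Wiener index `W(G)`. -/
noncomputable def Wiener [Fintype V] (G : SimpleGraph V) : ℝ :=
  (1/2) * ∑ x, ∑ y, (G.dist x y : ℝ)

/-- `D_{T}(v)`: sum of distances from `v` to the vertices of its connected
component in `G'` (used for the branch trees of a unicyclic graph). -/
noncomputable def branchD [Fintype V] (G' : SimpleGraph V) (v : V) : ℝ :=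
  ∑ u, if G'.Reachable v u then (G'.dist v u : ℝ) else 0

/-- The set of edges of the cycle `c 0 - c 1 - ⋯ - c (l-1) - c 0`. -/
def cycleEdges {l : ℕ} [NeZero l] (c : Fin l → V) : Set (Sym2 V) :=
  Set.range fun i : Fin l => s(c i, c (i + 1))

/-- Distance from a vertex to a set of vertices. -/
noncomputable def distToSet [Fintype V] (G : SimpleGraph V) (x : V) (s : Set V) : ℕ :=
  sInf {d | ∃ y ∈ s, G.dist x y = d}

/-- `v` is the center of a star. -/
def IsStarCenter (G : SimpleGraph V) (v : V) : Prop := ∀ u, u ≠ v → G.Adj v u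

/-- `G` is a star. -/
def IsStar (G : SimpleGraph V) : Prop := ∃ v, IsStarCenter G v

/-- The lollipop graph `P_n^l` : a cycle `C_l` on `0,…,l-1` together with a
path on `l,…,n-1` attached at the cycle vertex `0`. -/
def lollipop (n l : ℕ) : SimpleGraph (Fin n) :=
  SimpleGraph.fromRel (fun a b =>
    (a.val + 1 = b.val ∧ b.val < l) ∨ (a.val = 0 ∧ b.val = l - 1) ∨
    (a.val = 0 ∧ b.val = l) ∨ (l ≤ a.val ∧ a.val + 1 = b.val))

/-- The graph `S_n^l` : a cycle `C_l` on `0,…,l-1` with `n - l` pendant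
vertices `l,…,n-1` attached at the cycle vertex `0`. -/
def starCycle (n l : ℕ) : SimpleGraph (Fin n) :=
  SimpleGraph.fromRel (fun a b =>
    (a.val + 1 = b.val ∧ b.val < l) ∨ (a.val = 0 ∧ b.val = l - 1) ∨
    (a.val = 0 ∧ l ≤ b.val))

/-- The cycle graph `C_n` on `Fin n`. -/
def cycleG (n : ℕ) : SimpleGraph (Fin n) :=
  SimpleGraph.fromRel (fun a b => a.val + 1 = b.val ∨ (a.val = 0 ∧ b.val = n - 1))

/-! Expanding both sums over ordered pairs writes `(2n - 1) * D(v) - 2 * W` as the sum over all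
`(x, y)` of `d(v, x) + d(v, y) - d(x, y)`, with the diagonal terms halved. Each term is at least its
value in the star centred at `v`, by the triangle inequality. It is also at most
`2 * min (d(v, x)) (d(v, y))`, again by the triangle inequality. Since the distances from `v` fill
an initial segment of `ℕ`, the vertices can be listed as `x₀, x₁, …` with `d(v, xᵢ) ≤ i`, so each
term is at most its value in a path starting at `v`. Equality of the sums forces termwise equality,
which determines all distances. -/

section Distance

variable {W : Type*} {G : SimpleGraph V} {H : SimpleGraph W}

lemma exists_dist_eq_and_dist_eq_sub {u w : V} {k : ℕ} (hk : k ≤ G.dist u w) :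
    ∃ z, G.dist u z = k ∧ G.dist z w = G.dist u w - k := by
  by_cases h : G.dist u w = 0
  · exact ⟨u, by rw [dist_self]; lia, by lia⟩
  · obtain ⟨p, hp⟩ := exists_walk_of_dist_ne_zero h
    refine ⟨p.getVert k, ?_, ?_⟩
    · rw [← length_eq_dist_of_subwalk hp (p.isSubwalk_take k), Walk.take_length]
      lia
    · rw [← length_eq_dist_of_subwalk hp (p.isSubwalk_drop k), Walk.drop_length, hp]

lemma isLowerSet_range_dist (G : SimpleGraph V) (v : V) : IsLowerSet (Set.range (G.dist v)) := by
  rintro _ k hk ⟨x, rfl⟩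
  obtain ⟨z, hz, -⟩ := exists_dist_eq_and_dist_eq_sub hk
  exact ⟨z, hz⟩

lemma dist_map_le (f : G →g H) {u w : V} (h : G.Reachable u w) :
    H.dist (f u) (f w) ≤ G.dist u w := by
  obtain ⟨p, hp⟩ := h.exists_walk_length_eq_dist
  simpa [hp] using dist_le (p.map f)

lemma dist_map_iso (f : G ≃g H) (u w : V) : H.dist (f u) (f w) = G.dist u w := by
  by_cases h : G.Reachable u w
  · refine (dist_map_le f.toHom h).antisymm ?_
    simpa using dist_map_le f.symm.toHom (f.reachable_iff.2 h)
  · rw [dist_eq_zero_of_not_reachable h,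
      dist_eq_zero_of_not_reachable (mt f.reachable_iff.1 h)]

lemma le_add_length_of_adj {φ : V → ℕ} (hφ : ∀ a b, G.Adj a b → φ b ≤ φ a + 1) {u w : V}
    (p : G.Walk u w) : φ w ≤ φ u + p.length := by
  induction p with
  | nil => rfl
  | cons h p ih =>
    rw [Walk.length_cons]
    linarith [hφ _ _ h]

lemma dist_pathGraph {n : ℕ} (i j : Fin n) : (pathGraph n).dist i j = Nat.dist i j := by
  wlog hij : i ≤ j generalizing i j
  · rw [SimpleGraph.dist_comm, Nat.dist_comm, this j i (le_of_not_ge hij)]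
  rw [Nat.dist_eq_sub_of_le hij]
  apply le_antisymm
  · obtain ⟨j, hj⟩ := j
    induction j, (show i.1 ≤ j from hij) using Nat.le_induction with
    | base => simp
    | succ j hij' ih =>
      have hadj : (pathGraph n).Adj ⟨j, by lia⟩ ⟨j + 1, hj⟩ := pathGraph_adj.2 (.inl rfl)
      have htri := (pathGraph_preconnected n i ⟨j, by lia⟩).dist_triangle_left ⟨j + 1, hj⟩
      rw [dist_eq_one_iff_adj.2 hadj] at htri
      have := ih (by lia) hij'
      simp only at this ⊢
      lia
  · obtain ⟨p, hp⟩ := (pathGraph_preconnected n i j).exists_walk_length_eq_dist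
    have hval : ∀ a b, (pathGraph n).Adj a b → b.1 ≤ a.1 + 1 := fun a b h => by
      rw [pathGraph_adj] at h
      lia
    have := le_add_length_of_adj hval p
    lia

end Distance

lemma exists_equiv_fin_forall_le {α : Type*} [Fintype α] (f : α → ℕ)
    (hf : IsLowerSet (Set.range f)) : ∃ e : Fin (Fintype.card α) ≃ α, ∀ i, f (e i) ≤ i := by
  let e₀ := (Fintype.equivFin α).symm
  let e := (Tuple.sort (f ∘ e₀)).trans e₀
  have hmono : Monotone (f ∘ e) := Tuple.monotone_sort (f ∘ e₀)
  refine ⟨e, fun i => ?_⟩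
  have hsub : range (f (e i)) ⊆ (Iio i).image (f ∘ e) := fun k hk => by
    have hk : k < f (e i) := mem_range.1 hk
    obtain ⟨x, rfl⟩ := hf hk.le ⟨e i, rfl⟩
    exact mem_image.2 ⟨e.symm x, mem_Iio.2 (hmono.reflect_lt (by simpa using hk)), by simp⟩
  calc f (e i) = #(range (f (e i))) := (card_range _).symm
    _ ≤ #((Iio i).image (f ∘ e)) := card_le_card hsub
    _ ≤ #(Iio i) := card_image_le
    _ = i := Fin.card_Iio i

lemma sum_sum_eq_sum_sum_iff_of_le {ι κ M : Type*} [Fintype ι] [Fintype κ] [AddCommMonoid M]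
    [PartialOrder M] [IsOrderedCancelAddMonoid M] {f g : ι → κ → M} (h : ∀ i j, f i j ≤ g i j) :
    ∑ i, ∑ j, f i j = ∑ i, ∑ j, g i j ↔ ∀ i j, f i j = g i j := by
  rw [← Fintype.sum_prod_type', ← Fintype.sum_prod_type',
    sum_eq_sum_iff_of_le fun p _ => h p.1 p.2]
  simp

/-- The contribution of the ordered pair `(x, y)` to `(2n - 1) * D(v) - 2 * W`: twice the Gromov
product of `x` and `y` based at `v` when `x ≠ y`, and the Gromov product itself when `x = y`. -/
noncomputable def pairTerm (G : SimpleGraph V) (v x y : V) : ℝ :=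
  if x = y then G.dist v x else G.dist v x + G.dist v y - G.dist x y

/-- The value of `pairTerm` in the star with centre `v`. -/
noncomputable def starTerm (v x y : V) : ℝ := if x = y ∧ x ≠ v then 1 else 0

/-- The value of `pairTerm` for the vertices `i` and `j` of the path `0 - 1 - 2 - ⋯` based at
`0`. -/
noncomputable def pathTerm (i j : ℕ) : ℝ := if i = j then i else 2 * min i j

lemma sum_pairTerm [Fintype V] (G : SimpleGraph V) (v : V) :
    ∑ x, ∑ y, pairTerm G v x y = (2 * (Fintype.card V : ℝ) - 1) * Dcent G v - 2 * Wiener G := by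
  have hterm (x y : V) : pairTerm G v x y =
      G.dist v x + G.dist v y - G.dist x y - if x = y then (G.dist v x : ℝ) else 0 := by
    unfold pairTerm
    split_ifs with h
    · simp [h]
    · simp
  simp only [hterm, sum_sub_distrib, sum_add_distrib, sum_const, card_univ, nsmul_eq_mul,
    ← mul_sum, Wiener, Dcent, sum_ite_eq, mem_univ, if_true]
  ring

lemma sum_starTerm [Fintype V] (v : V) :
    ∑ x, ∑ y, starTerm v x y = (Fintype.card V : ℝ) - 1 := by
  have hterm (x y : V) : starTerm v x y = if x = y then 1 - (if x = v then 1 else 0) else 0 := by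
    unfold starTerm
    split_ifs <;> simp_all
  simp [hterm]

lemma two_mul_sum_fin_val (n : ℕ) : 2 * ∑ i : Fin n, (i : ℝ) = n * (n - 1) := by
  induction n with
  | zero => simp
  | succ n ih =>
    simp only [Fin.sum_univ_castSucc, Fin.val_castSucc, Fin.val_last, mul_add, ih]
    push_cast
    ring

lemma sum_pathTerm (n : ℕ) :
    ∑ i : Fin n, ∑ j : Fin n, pathTerm i j = (n : ℝ) * (n - 1) * (4 * n - 5) / 6 := by
  induction n with
  | zero => simp
  | succ n ih =>
    have hcol (i : Fin n) : pathTerm i n = 2 * i := by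
      simp [pathTerm, i.2.ne, i.2.le]
    have hrow (j : Fin n) : pathTerm n j = 2 * j := by
      simp [pathTerm, j.2.ne', j.2.le]
    have hdiag : pathTerm n n = n := by simp [pathTerm]
    simp only [Fin.sum_univ_castSucc, Fin.val_castSucc, Fin.val_last, sum_add_distrib, ih, hcol,
      hrow, hdiag, ← mul_sum, two_mul_sum_fin_val]
    push_cast
    ring

section Bounds

variable {G : SimpleGraph V}

lemma starTerm_le_pairTerm (hG : G.Connected) (v x y : V) : starTerm v x y ≤ pairTerm G v x y := by
  unfold starTerm pairTerm
  by_cases hxy : x = y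
  · rcases eq_or_ne x v with rfl | hxv
    · simp [hxy]
    · have hpos : 1 ≤ G.dist v x := hG.pos_dist_of_ne hxv.symm
      simpa [← hxy, hxv] using hpos
  · have htri : G.dist x y ≤ G.dist v x + G.dist v y :=
      G.dist_comm (u := x) (v := v) ▸ hG.dist_triangle
    simpa [hxy] using mod_cast htri

lemma eq_starGraph_iff_forall_dist (hG : G.Connected) (v : V) :
    G = starGraph v ↔
      (∀ x ≠ v, G.dist v x = 1) ∧ ∀ x y, x ≠ y → G.dist x y = G.dist v x + G.dist v y := by
  constructor
  · rintro rfl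
    have hroot (x) (hx : x ≠ v) : (starGraph v).dist v x = 1 :=
      dist_eq_one_iff_adj.2 (starGraph_center_adj hx.symm)
    refine ⟨hroot, fun x y hxy => ?_⟩
    rcases eq_or_ne x v with rfl | hx
    · simp
    rcases eq_or_ne y v with rfl | hy
    · simp [SimpleGraph.dist_comm]
    have hlower : 1 < (starGraph v).dist x y :=
      hG.one_lt_dist_of_ne_of_not_adj hxy (by simp [hx, hy])
    have hupper : (starGraph v).dist x y ≤ (starGraph v).dist x v + (starGraph v).dist v y :=
      hG.dist_triangle
    rw [SimpleGraph.dist_comm (u := x) (v := v), hroot x hx, hroot y hy] at hupper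
    rw [hroot x hx, hroot y hy]
    lia
  · rintro ⟨hroot, hpair⟩
    ext x y
    rw [starGraph_adj, ← dist_eq_one_iff_adj]
    rcases eq_or_ne x y with rfl | hxy
    · simp
    rw [hpair x y hxy]
    rcases eq_or_ne x v with rfl | hx
    · simp [hxy, hroot y hxy.symm]
    rcases eq_or_ne y v with rfl | hy
    · simp [hx, hroot x hx]
    · simp [hx, hy, hroot x hx, hroot y hy]

lemma forall_starTerm_eq_pairTerm_iff (hG : G.Connected) (v : V) :
    (∀ x y, starTerm v x y = pairTerm G v x y) ↔ G = starGraph v := by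
  rw [eq_starGraph_iff_forall_dist hG]
  constructor
  · intro h
    refine ⟨fun x hx => ?_, fun x y hxy => ?_⟩
    · have hxx : (1 : ℝ) = G.dist v x := by simpa [starTerm, pairTerm, hx] using h x x
      exact mod_cast hxx.symm
    · have hsub : (0 : ℝ) = G.dist v x + G.dist v y - G.dist x y := by
        simpa [starTerm, pairTerm, hxy] using h x y
      exact mod_cast (sub_eq_zero.1 hsub.symm).symm
  · rintro ⟨hroot, hpair⟩ x y
    unfold starTerm pairTerm
    rcases eq_or_ne x y with rfl | hxy
    · rcases eq_or_ne x v with rfl | hx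
      · simp
      · simp [hx, hroot x hx]
    · simp [hxy, hpair x y hxy]

lemma pairTerm_le_pathTerm (hG : G.Connected) {v x y : V} {i j : ℕ} (hij : i = j ↔ x = y)
    (hx : G.dist v x ≤ i) (hy : G.dist v y ≤ j) : pairTerm G v x y ≤ pathTerm i j := by
  have hxy : G.dist v x ≤ G.dist v y + G.dist x y :=
    G.dist_comm (u := x) (v := y) ▸ hG.dist_triangle
  have hyx : G.dist v y ≤ G.dist v x + G.dist x y := hG.dist_triangle
  rify at hx hy hxy hyx
  unfold pairTerm pathTerm
  split_ifs with h h' h'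
  · exact hx
  · exact absurd (hij.2 h) h'
  · exact absurd (hij.1 h') h
  · rw [← sub_nonneg]
    rcases min_choice i j with h | h <;> rw [h] <;> linarith

end Bounds

section Path

variable {G : SimpleGraph V} {v : V} {n : ℕ}

lemma dist_equiv_fin_of_dist_root (e : Fin n ≃ V) (he : ∀ i, G.dist v (e i) = i) (i j : Fin n) :
    G.dist (e i) (e j) = Nat.dist i j := by
  wlog hij : i ≤ j generalizing i j
  · rw [SimpleGraph.dist_comm, Nat.dist_comm, this j i (le_of_not_ge hij)]
  obtain ⟨z, hvz, hzj⟩ : ∃ z, G.dist v z = i ∧ G.dist z (e j) = G.dist v (e j) - i :=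
    exists_dist_eq_and_dist_eq_sub (by rw [he]; exact hij)
  obtain ⟨k, rfl⟩ := e.surjective z
  obtain rfl : k = i := Fin.ext ((he k).symm.trans hvz)
  rw [hzj, he, Nat.dist_eq_sub_of_le hij]

lemma pairTerm_eq_pathTerm (e : Fin n ≃ V) (he : ∀ i, G.dist v (e i) = i) (i j : Fin n) :
    pairTerm G v (e i) (e j) = pathTerm i j := by
  have hmin : (i : ℕ) + j = Nat.dist i j + 2 * min i.1 j := by
    unfold Nat.dist
    lia
  simp only [pairTerm, pathTerm, e.injective.eq_iff, Fin.ext_iff, he,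
    dist_equiv_fin_of_dist_root e he]
  rify at hmin
  rw [hmin, add_sub_cancel_left, Nat.cast_min]

lemma val_eq_zero_or_add_one_eq_of_degree_pathGraph_le_one (i : Fin n)
    (h : (pathGraph n).degree i ≤ 1) : i.1 = 0 ∨ i.1 + 1 = n := by
  by_contra! hi
  rw [← card_neighborFinset_eq_degree, card_le_one] at h
  have hprev : ⟨i - 1, by lia⟩ ∈ (pathGraph n).neighborFinset i := by
    rw [mem_neighborFinset, pathGraph_adj]
    lia
  have hnext : ⟨i + 1, by lia⟩ ∈ (pathGraph n).neighborFinset i := by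
    rw [mem_neighborFinset, pathGraph_adj]
    lia
  have := congrArg Fin.val (h _ hprev _ hnext)
  simp only at this
  lia

lemma exists_equiv_dist_eq_iff_pathGraph_end [Fintype V] :
    (∃ e : Fin n ≃ V, ∀ i, G.dist v (e i) = i) ↔
      Nonempty (pathGraph n ≃g G) ∧ G.degree v ≤ 1 := by
  constructor
  · rintro ⟨e, he⟩
    refine ⟨⟨e, fun {i j} => ?_⟩, ?_⟩
    · rw [← dist_eq_one_iff_adj, dist_equiv_fin_of_dist_root e he, ← dist_pathGraph,
        dist_eq_one_iff_adj]
    · have hinj : Function.Injective (G.dist v) := fun x y hxy => by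
        obtain ⟨i, rfl⟩ := e.surjective x
        obtain ⟨j, rfl⟩ := e.surjective y
        rw [he, he] at hxy
        rw [Fin.ext hxy]
      rw [← card_neighborFinset_eq_degree, card_le_one]
      intro x hx y hy
      rw [mem_neighborFinset, ← dist_eq_one_iff_adj] at hx hy
      exact hinj (hx.trans hy.symm)
  · rintro ⟨⟨f⟩, hdeg⟩
    obtain ⟨i, rfl⟩ := f.surjective v
    rw [f.degree_eq] at hdeg
    rcases val_eq_zero_or_add_one_eq_of_degree_pathGraph_le_one i hdeg with hi | hi
    · refine ⟨f.toEquiv, fun j => ?_⟩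
      rw [RelIso.coe_fn_toEquiv, dist_map_iso, dist_pathGraph, hi, Nat.dist_zero_left]
    · refine ⟨Fin.revPerm.trans f.toEquiv, fun j => ?_⟩
      rw [Equiv.trans_apply, RelIso.coe_fn_toEquiv, dist_map_iso, dist_pathGraph,
        Fin.revPerm_apply, Fin.val_rev, Nat.dist]
      lia

end Path

section Main

variable [Fintype V] {G : SimpleGraph V}

lemma card_sub_one_le_transmission_sub_wiener (hG : G.Connected) (v : V) :
    (Fintype.card V : ℝ) - 1 ≤ (2 * (Fintype.card V : ℝ) - 1) * Dcent G v - 2 * Wiener G := by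
  rw [← sum_starTerm v, ← sum_pairTerm]
  exact sum_le_sum fun x _ => sum_le_sum fun y _ => starTerm_le_pairTerm hG v x y

lemma transmission_sub_wiener_eq_card_sub_one_iff (hG : G.Connected) (v : V) :
    (2 * (Fintype.card V : ℝ) - 1) * Dcent G v - 2 * Wiener G = (Fintype.card V : ℝ) - 1 ↔
      G = starGraph v := by
  rw [← sum_starTerm v, ← sum_pairTerm, eq_comm,
    sum_sum_eq_sum_sum_iff_of_le (starTerm_le_pairTerm hG v), forall_starTerm_eq_pairTerm_iff hG]

lemma sum_pairTerm_equiv (v : V) (e : Fin (Fintype.card V) ≃ V) :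
    ∑ i, ∑ j, pairTerm G v (e i) (e j) =
      (2 * (Fintype.card V : ℝ) - 1) * Dcent G v - 2 * Wiener G := by
  rw [← sum_pairTerm, ← e.sum_comp]
  exact sum_congr rfl fun i _ => e.sum_comp (pairTerm G v (e i))

lemma pairTerm_equiv_le_pathTerm (hG : G.Connected) {v : V} {e : Fin (Fintype.card V) ≃ V}
    (he : ∀ i, G.dist v (e i) ≤ i) (i j : Fin (Fintype.card V)) :
    pairTerm G v (e i) (e j) ≤ pathTerm i j :=
  pairTerm_le_pathTerm hG (by rw [e.injective.eq_iff, Fin.ext_iff]) (he i) (he j)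

lemma transmission_sub_wiener_le_path (hG : G.Connected) (v : V) :
    (2 * (Fintype.card V : ℝ) - 1) * Dcent G v - 2 * Wiener G ≤
      Fintype.card V * (Fintype.card V - 1) * (4 * Fintype.card V - 5) / 6 := by
  obtain ⟨e, he⟩ := exists_equiv_fin_forall_le _ (isLowerSet_range_dist G v)
  rw [← sum_pairTerm_equiv v e, ← sum_pathTerm]
  exact sum_le_sum fun i _ => sum_le_sum fun j _ => pairTerm_equiv_le_pathTerm hG he i j

lemma transmission_sub_wiener_eq_path_iff (hG : G.Connected) (v : V) :
    (2 * (Fintype.card V : ℝ) - 1) * Dcent G v - 2 * Wiener G =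
      Fintype.card V * (Fintype.card V - 1) * (4 * Fintype.card V - 5) / 6 ↔
      ∃ e : Fin (Fintype.card V) ≃ V, ∀ i, G.dist v (e i) = i := by
  rw [← sum_pathTerm]
  constructor
  · obtain ⟨e, he⟩ := exists_equiv_fin_forall_le _ (isLowerSet_range_dist G v)
    rw [← sum_pairTerm_equiv v e,
      sum_sum_eq_sum_sum_iff_of_le (pairTerm_equiv_le_pathTerm hG he)]
    exact fun h => ⟨e, fun i => by simpa [pairTerm, pathTerm] using h i i⟩
  · rintro ⟨e, he⟩
    simp only [← sum_pairTerm_equiv v e, pairTerm_eq_pathTerm e he]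

end Main

lemma eq_starGraph_iff_isStarCenter {G : SimpleGraph V} (hG : G.IsAcyclic) {v : V} :
    G = starGraph v ↔ IsStarCenter G v := by
  constructor
  · rintro rfl u hu
    exact starGraph_center_adj hu.symm
  · intro h
    have hle : starGraph v ≤ G := fun x y hadj => by
      obtain ⟨hxy, rfl | rfl⟩ := starGraph_adj.1 hadj
      · exact h y hxy.symm
      · exact (h x hxy).symm
    have hmax := (isTree_iff_maximal_isAcyclic.1 (isTree_starGraph v)).2
    exact (hmax.eq_of_le hG hle).symm

theorem transmission_wiener_bounds_general [Fintype V] (G : SimpleGraph V) (hG : G.Connected)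
    (n : ℕ) (hn : Fintype.card V = n) (v : V) :
    (n : ℝ) - 1 ≤ (2 * (n : ℝ) - 1) * Dcent G v - 2 * Wiener G ∧
    (2 * (n : ℝ) - 1) * Dcent G v - 2 * Wiener G ≤ (n : ℝ) * (n - 1) * (4 * n - 5) / 6 ∧
    ((2 * (n : ℝ) - 1) * Dcent G v - 2 * Wiener G = (n : ℝ) - 1 ↔ G = starGraph v) ∧
    ((2 * (n : ℝ) - 1) * Dcent G v - 2 * Wiener G = (n : ℝ) * (n - 1) * (4 * n - 5) / 6 ↔
      Nonempty (pathGraph n ≃g G) ∧ G.degree v ≤ 1) := by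
  subst hn
  exact ⟨card_sub_one_le_transmission_sub_wiener hG v, transmission_sub_wiener_le_path hG v,
    transmission_sub_wiener_eq_card_sub_one_iff hG v,
    (transmission_sub_wiener_eq_path_iff hG v).trans exists_equiv_dist_eq_iff_pathGraph_end⟩

/-- For a tree `T` on `n` vertices and `v ∈ V(T)`,
`n−1 ≤ (2n−1)·D_T(v) − 2·W(T) ≤ n(n−1)(4n−5)/6`, with equality on the left
iff `T` is a star with center `v`, and on the right iff `T` is a path with
`v` as an end vertex. -/
theorem transmission_wiener_bounds [Fintype V] (T : SimpleGraph V) (hT : T.IsTree)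
    (n : ℕ) (hn : Fintype.card V = n) (v : V) :
    (n : ℝ) - 1 ≤ (2 * (n : ℝ) - 1) * Dcent T v - 2 * Wiener T ∧
    (2 * (n : ℝ) - 1) * Dcent T v - 2 * Wiener T ≤ (n : ℝ) * (n - 1) * (4 * n - 5) / 6 ∧
    ((2 * (n : ℝ) - 1) * Dcent T v - 2 * Wiener T = (n : ℝ) - 1 ↔ IsStarCenter T v) ∧
    ((2 * (n : ℝ) - 1) * Dcent T v - 2 * Wiener T = (n : ℝ) * (n - 1) * (4 * n - 5) / 6 ↔
      Nonempty (SimpleGraph.pathGraph n ≃g T) ∧ T.degree v ≤ 1) := by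
  simpa only [eq_starGraph_iff_isStarCenter hT.isAcyclic] using
    transmission_wiener_bounds_general T hT.connected n hn v
end

section
/- Let G be an n-vertex unicyclic graph with unique cycle C_l = v_1…v_l and branches T_1,…,T_l, and let x ∈ V(T_k). Then the cover cost satisfies CC(x) = 2·Kf(G) + Σ_{i=1}^{l} D_{T_i}(v_i) − n·d(x, v_k), where CC(x) = Σ_{y∈V(G)} H_{xy}. -/
open SimpleGraph Finset

attribute [local instance] Classical.propDecidable

variable {V : Type*}

/-!
Write `L` for the Laplacian matrix, `m` for the number of edges and `n` for the number of vertices.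
First-step analysis gives `L h = deg - 2m δ_y` for the hitting times `h = H(·, y)`, so
`L CC = n deg - 2m`. If `L ρ = 2m / n - deg`, then `CC + n ρ` is harmonic, hence equal to its mean,
and the commute time identity `H(x, y) + H(y, x) = 2m r(x, y)` evaluates `∑ CC = 2m Kf`.

In a unicyclic graph `m = n` and such a `ρ` is the distance to the cycle: the slack
`∑_{y ∼ x} (ρ x + 1 - ρ y) = (L ρ + deg) x` has nonnegative terms, is at least `2` at every vertex
(off the cycle a neighbour closer to it contributes `2`, on the cycle the two cycle neighbours
contribute `1` each) and sums to `2n`, so it is `2` everywhere. Equality also shows that every path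
in a branch `T_i` that starts at `v_i` moves away from the cycle, so `ρ x = d(x, v_i)` on `T_i`.
-/

open scoped Matrix

section NonnegMatrix

variable [Fintype V] {R : Type*}

lemma pow_mulVec_nonneg [Semiring R] [PartialOrder R] [IsOrderedRing R] {A : Matrix V V R}
    (hA : ∀ i j, 0 ≤ A i j) {u : V → R} (hu : 0 ≤ u) (k : ℕ) : 0 ≤ A ^ k *ᵥ u := by
  induction k with
  | zero => simpa using hu
  | succ k ih =>
    rw [pow_succ', ← Matrix.mulVec_mulVec]
    exact fun i => dotProduct_nonneg_of_nonneg (hA i) ih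

lemma sum_range_pow_mulVec_le [Semiring R] [PartialOrder R] [IsOrderedRing R] {A : Matrix V V R}
    (hA : ∀ i j, 0 ≤ A i j) {u g : V → R} (hg : 0 ≤ g) (hug : u + A *ᵥ g ≤ g) (N : ℕ) :
    ∑ k ∈ range N, A ^ k *ᵥ u ≤ g := by
  induction N with
  | zero => simpa using hg
  | succ N ih =>
    calc ∑ k ∈ range (N + 1), A ^ k *ᵥ u
        = u + A *ᵥ ∑ k ∈ range N, A ^ k *ᵥ u := by
          rw [sum_range_succ', Matrix.mulVec_sum, add_comm]
          simp only [pow_succ', Matrix.mulVec_mulVec, pow_zero, Matrix.one_mulVec]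
      _ ≤ u + A *ᵥ g :=
          add_le_add_right (fun i => dotProduct_le_dotProduct_of_nonneg_left ih (hA i)) u
      _ ≤ g := hug

lemma summable_pow_mulVec {A : Matrix V V ℝ} (hA : ∀ i j, 0 ≤ A i j) {u g : V → ℝ}
    (hu : 0 ≤ u) (hg : 0 ≤ g) (hug : u + A *ᵥ g ≤ g) : Summable fun k => A ^ k *ᵥ u :=
  Pi.summable.2 fun i => summable_of_sum_range_le (fun k => pow_mulVec_nonneg hA hu k i) fun N => by
    simpa using sum_range_pow_mulVec_le hA hg hug N i

lemma tsum_pow_mulVec_eq_add [CommRing R] [TopologicalSpace R] [IsTopologicalRing R] [T2Space R]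
    {A : Matrix V V R} {u : V → R} (h : Summable fun k => A ^ k *ᵥ u) :
    ∑' k, A ^ k *ᵥ u = u + A *ᵥ ∑' k, A ^ k *ᵥ u := by
  have hcont : Continuous A.mulVecLin := continuous_const.matrix_mulVec continuous_id
  rw [← Matrix.mulVecLin_apply A, h.map_tsum A.mulVecLin hcont, h.tsum_eq_zero_add]
  simp only [pow_succ', pow_zero, Matrix.one_mulVec, Matrix.mulVecLin_apply, Matrix.mulVec_mulVec]

end NonnegMatrix

section Laplacian

variable [Fintype V] (G : SimpleGraph V)

lemma degR_eq_degree (x : V) : degR G x = G.degree x := by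
  rw [degR, ← card_neighborFinset_eq_degree, neighborFinset_eq_filter]

lemma sum_degree_eq_two_mul_esize : ∑ x, (G.degree x : ℝ) = 2 * esize G := by
  rw [esize, Nat.card_eq_fintype_card, ← edgeFinset_card]
  exact_mod_cast G.sum_degrees_eq_twice_card_edges

lemma lapMatrix_mulVec_apply_eq_sum_sub {R : Type*} [NonAssocRing R] (f : V → R) (x : V) :
    (G.lapMatrix R *ᵥ f) x = ∑ y ∈ G.neighborFinset x, (f x - f y) := by
  rw [lapMatrix_mulVec_apply, sum_sub_distrib, sum_const, card_neighborFinset_eq_degree,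
    nsmul_eq_mul]

lemma dotProduct_lapMatrix_mulVec_comm {R : Type*} [CommRing R] (f g : V → R) :
    f ⬝ᵥ G.lapMatrix R *ᵥ g = g ⬝ᵥ G.lapMatrix R *ᵥ f := by
  rw [Matrix.dotProduct_mulVec, ← Matrix.mulVec_transpose, (G.isSymm_lapMatrix R).eq,
    dotProduct_comm]

lemma lapMatrix_mulVec_const {R : Type*} [CommRing R] (a : R) :
    G.lapMatrix R *ᵥ (fun _ => a) = 0 := by
  ext x
  simp [lapMatrix_mulVec_apply_eq_sum_sub]

lemma sum_lapMatrix_mulVec {R : Type*} [CommRing R] (f : V → R) :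
    ∑ x, (G.lapMatrix R *ᵥ f) x = 0 := by
  rw [← one_dotProduct, dotProduct_lapMatrix_mulVec_comm]
  exact (congrArg _ (lapMatrix_mulVec_const G 1)).trans (dotProduct_zero f)

lemma lapMatrix_mulVec_eq_zero_of_dotProduct_eq_zero {f : V → ℝ}
    (hf : f ⬝ᵥ G.lapMatrix ℝ *ᵥ f = 0) : G.lapMatrix ℝ *ᵥ f = 0 :=
  ((G.posSemidef_lapMatrix ℝ).dotProduct_mulVec_zero_iff f).1 hf

variable {G}

lemma eq_of_lapMatrix_mulVec_eq_zero (hG : G.Connected) {f : V → ℝ}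
    (hf : G.lapMatrix ℝ *ᵥ f = 0) (x y : V) : f x = f y :=
  (lapMatrix_mulVec_eq_zero_iff_forall_reachable G).1 hf x y (hG.preconnected x y)

lemma exists_eq_on_and_lapMatrix_mulVec_eq_off (hG : G.Connected) {B : Set V} (hB : B.Nonempty)
    (b : V → ℝ) :
    ∃ g : V → ℝ, (∀ x ∈ B, g x = b x) ∧ ∀ x ∉ B, (G.lapMatrix ℝ *ᵥ g) x = b x := by
  let A : Matrix V V ℝ := Matrix.of fun x => if x ∈ B then Pi.single x 1 else G.lapMatrix ℝ x
  have hA_mem (f : V → ℝ) {x : V} (hx : x ∈ B) : (A *ᵥ f) x = f x := by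
    simp [A, Matrix.mulVec, hx]
  have hA_notMem (f : V → ℝ) {x : V} (hx : x ∉ B) :
      (A *ᵥ f) x = (G.lapMatrix ℝ *ᵥ f) x := by
    simp [A, Matrix.mulVec, hx]
  have hinj : Function.Injective A.mulVecLin := by
    refine (injective_iff_map_eq_zero _).2 fun f hf => ?_
    have hmem {x : V} (hx : x ∈ B) : f x = 0 := (hA_mem f hx).symm.trans (congrFun hf x)
    have henergy : f ⬝ᵥ G.lapMatrix ℝ *ᵥ f = 0 := sum_eq_zero fun x _ => by
      by_cases hx : x ∈ B
      · rw [hmem hx, zero_mul]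
      · rw [← hA_notMem f hx, ← Matrix.mulVecLin_apply, hf, Pi.zero_apply, mul_zero]
    obtain ⟨z, hz⟩ := hB
    ext x
    rw [eq_of_lapMatrix_mulVec_eq_zero hG (lapMatrix_mulVec_eq_zero_of_dotProduct_eq_zero G henergy)
      x z, hmem hz, Pi.zero_apply]
  obtain ⟨g, rfl⟩ := LinearMap.injective_iff_surjective.1 hinj b
  exact ⟨g, fun x hx => (hA_mem g hx).symm, fun x hx => (hA_notMem g hx).symm⟩

lemma nonneg_of_lapMatrix_mulVec_pos_off {B : Set V} {g : V → ℝ} (hmem : ∀ x ∈ B, 0 ≤ g x)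
    (hoff : ∀ x ∉ B, 0 < (G.lapMatrix ℝ *ᵥ g) x) : 0 ≤ g := by
  intro x
  have : Nonempty V := ⟨x⟩
  obtain ⟨z, hz⟩ := Finite.exists_min g
  refine le_trans (hmem z ?_) (hz x)
  by_contra hzB
  refine (hoff z hzB).not_ge ?_
  rw [lapMatrix_mulVec_apply_eq_sum_sub]
  exact sum_nonpos fun y _ => sub_nonpos.2 (hz y)

end Laplacian

section HittingTime

variable [Fintype V] {G : SimpleGraph V}

lemma hitMat_nonneg (y u v : V) : 0 ≤ hitMat G y u v := by
  rw [hitMat, Matrix.of_apply, degR_eq_degree]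
  split_ifs <;> positivity

lemma hitMat_mulVec_congr {y : V} {f g : V → ℝ} (hfg : ∀ v ≠ y, f v = g v) :
    hitMat G y *ᵥ f = hitMat G y *ᵥ g := by
  ext x
  refine sum_congr rfl fun v _ => ?_
  by_cases hv : v = y
  · simp [hitMat, hv]
  · rw [hfg v hv]

lemma lapMatrix_mulVec_apply_eq_degree_mul {y : V} {g : V → ℝ} (hgy : g y = 0) (x : V) :
    (G.lapMatrix ℝ *ᵥ g) x = G.degree x * (g x - (hitMat G y *ᵥ g) x) := by
  have hQ : (hitMat G y *ᵥ g) x = (G.degree x : ℝ)⁻¹ * ∑ v ∈ G.neighborFinset x, g v := by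
    rw [neighborFinset_eq_filter, sum_filter, mul_sum]
    refine sum_congr rfl fun v _ => ?_
    by_cases hv : v = y
    · simp [hv, hgy]
    · simp [hitMat, hv, degR_eq_degree]
  rcases (G.neighborFinset x).eq_empty_or_nonempty with hx | hx
  · have hdeg : G.degree x = 0 := by rw [← card_neighborFinset_eq_degree, hx, card_empty]
    simp [lapMatrix_mulVec_apply, hx, hdeg]
  · have hdeg : (G.degree x : ℝ) ≠ 0 := by
      exact_mod_cast (G.card_neighborFinset_eq_degree x ▸ hx.card_pos).ne'
    rw [lapMatrix_mulVec_apply, hQ, mul_sub, mul_inv_cancel_left₀ hdeg]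

lemma exists_nonneg_one_add_hitMat_mulVec_eq (hG : G.Connected) (y : V) :
    ∃ g : V → ℝ, 0 ≤ g ∧ 1 + hitMat G y *ᵥ g = g := by
  obtain ⟨g, hgy, hg⟩ := exists_eq_on_and_lapMatrix_mulVec_eq_off hG (Set.singleton_nonempty y)
    fun x => if x = y then 0 else (G.degree x : ℝ)
  replace hgy : g y = 0 := by simpa using hgy y rfl
  have hdeg {x : V} (hx : x ≠ y) : (0 : ℝ) < G.degree x := by
    exact_mod_cast (hG.preconnected x y).degree_pos_left hx
  have hg_off {x : V} (hx : x ≠ y) : (G.lapMatrix ℝ *ᵥ g) x = G.degree x := by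
    simpa [hx] using hg x hx
  have hg_nonneg : 0 ≤ g :=
    nonneg_of_lapMatrix_mulVec_pos_off (B := {y}) (by simp [hgy]) fun x hx =>
      (hdeg hx).trans_eq (hg_off hx).symm
  have hfix (x : V) (hx : x ≠ y) : (1 + hitMat G y *ᵥ g) x = g x := by
    have h := (lapMatrix_mulVec_apply_eq_degree_mul hgy x).symm.trans (hg_off hx)
    rw [mul_eq_left₀ (hdeg hx).ne'] at h
    rw [Pi.add_apply, Pi.one_apply, ← h, sub_add_cancel]
  refine ⟨1 + hitMat G y *ᵥ g, ?_, by rw [hitMat_mulVec_congr hfix]⟩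
  exact add_nonneg zero_le_one fun x => dotProduct_nonneg_of_nonneg (hitMat_nonneg y x) hg_nonneg

lemma summable_hitMat_pow_mulVec_one (hG : G.Connected) (y : V) :
    Summable fun k => hitMat G y ^ k *ᵥ (1 : V → ℝ) := by
  obtain ⟨g, hg, hfix⟩ := exists_nonneg_one_add_hitMat_mulVec_eq hG y
  exact summable_pow_mulVec (hitMat_nonneg y) zero_le_one hg hfix.le

lemma hitting_self (y : V) : hitting G y y = 0 := if_pos rfl

lemma hitting_of_ne (hG : G.Connected) {x y : V} (hxy : x ≠ y) :
    hitting G x y = (∑' k, hitMat G y ^ k *ᵥ (1 : V → ℝ)) x := by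
  rw [hitting, if_neg hxy, tsum_apply (summable_hitMat_pow_mulVec_one hG y)]
  simp only [Matrix.mulVec, dotProduct, Pi.one_apply, mul_one]

lemma hitting_eq_one_add_hitMat_mulVec (hG : G.Connected) {x y : V} (hxy : x ≠ y) :
    hitting G x y = 1 + (hitMat G y *ᵥ fun z => hitting G z y) x := by
  rw [hitting_of_ne hG hxy, tsum_pow_mulVec_eq_add (summable_hitMat_pow_mulVec_one hG y),
    Pi.add_apply, Pi.one_apply, hitMat_mulVec_congr fun v hv => (hitting_of_ne hG hv).symm]

lemma lapMatrix_mulVec_hitting_of_ne (hG : G.Connected) {x y : V} (hxy : x ≠ y) :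
    (G.lapMatrix ℝ *ᵥ fun z => hitting G z y) x = G.degree x := by
  rw [lapMatrix_mulVec_apply_eq_degree_mul (g := fun z => hitting G z y) (hitting_self y),
    hitting_eq_one_add_hitMat_mulVec hG hxy, add_sub_cancel_right, mul_one]

-- Off `y` this is first-step analysis; the value at `y` is forced since `L h` sums to zero.
lemma lapMatrix_mulVec_hitting (hG : G.Connected) (y : V) :
    (G.lapMatrix ℝ *ᵥ fun z => hitting G z y) =
      (fun x => (G.degree x : ℝ)) - Pi.single y (2 * (esize G : ℝ)) := by
  have hoff (x : V) (hx : x ≠ y) := lapMatrix_mulVec_hitting_of_ne hG hx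
  ext x
  rcases eq_or_ne x y with rfl | hx
  · have hsum := sum_lapMatrix_mulVec G fun z => hitting G z x
    have hdeg := sum_degree_eq_two_mul_esize G
    rw [← add_sum_erase _ _ (mem_univ x)] at hsum hdeg
    rw [sum_congr rfl fun z hz => hoff z (ne_of_mem_erase hz)] at hsum
    rw [Pi.sub_apply, Pi.single_eq_same]
    linarith
  · rw [hoff x hx, Pi.sub_apply, Pi.single_eq_of_ne hx, sub_zero]

end HittingTime

section EffectiveResistance

variable [Fintype V] {G : SimpleGraph V}

lemma energyFn_eq_dotProduct (φ : V → ℝ) : energyFn G φ = φ ⬝ᵥ G.lapMatrix ℝ *ᵥ φ := by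
  rw [energyFn, ← Matrix.toLinearMap₂'_apply', lapMatrix_toLinearMap₂', one_div_mul_eq_div]

lemma energyFn_nonneg (φ : V → ℝ) : 0 ≤ energyFn G φ := by
  rw [energyFn_eq_dotProduct]
  exact (G.posSemidef_lapMatrix ℝ).dotProduct_mulVec_nonneg φ

lemma energyFn_sub_smul (θ ψ : V → ℝ) (a : ℝ) :
    energyFn G (θ - a • ψ) =
      energyFn G θ - 2 * a * (θ ⬝ᵥ G.lapMatrix ℝ *ᵥ ψ) + a ^ 2 * energyFn G ψ := by
  simp only [energyFn_eq_dotProduct, Matrix.mulVec_sub, Matrix.mulVec_smul, sub_dotProduct,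
    dotProduct_sub, smul_dotProduct, dotProduct_smul, smul_eq_mul,
    dotProduct_lapMatrix_mulVec_comm G ψ θ]
  ring

lemma energyFn_smul_sub_const (ψ : V → ℝ) (a b : ℝ) :
    energyFn G (fun z => a * (ψ z - b)) = a ^ 2 * energyFn G ψ := by
  simp only [energyFn, mul_left_comm (a ^ 2), mul_sum, mul_ite, mul_zero, ← mul_sub, mul_pow,
    sub_sub_sub_cancel_right]

lemma eres_self (x : V) : eres G x x = 0 := by
  have hempty : {e : ℝ | ∃ φ : V → ℝ, φ x = 1 ∧ φ x = 0 ∧ e = energyFn G φ} = ∅ :=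
    Set.eq_empty_of_forall_notMem fun _ ⟨_, h₁, h₀, _⟩ => one_ne_zero (h₁.symm.trans h₀)
  rw [eres, hempty, Real.sInf_empty, inv_zero]

-- `ψ` is the potential of a unit current from `x` to `y`; rescaled to have voltage 1 it attains the
-- infimum, because `θ ⬝ᵥ L *ᵥ ψ = θ x - θ y = 1` for every competitor `θ`.
lemma eres_eq_sub_of_lapMatrix_mulVec {ψ : V → ℝ} {x y : V}
    (hψ : G.lapMatrix ℝ *ᵥ ψ = Pi.single x 1 - Pi.single y 1) : eres G x y = ψ x - ψ y := by
  rcases eq_or_ne x y with rfl | hxy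
  · rw [eres_self, sub_self]
  have hpair (θ : V → ℝ) : θ ⬝ᵥ G.lapMatrix ℝ *ᵥ ψ = θ x - θ y := by
    rw [hψ, dotProduct_sub, dotProduct_single_one, dotProduct_single_one]
  have henergy : energyFn G ψ = ψ x - ψ y := by rw [energyFn_eq_dotProduct, hpair]
  set r := ψ x - ψ y
  have hr : r ≠ 0 := by
    intro hr
    have hzero := lapMatrix_mulVec_eq_zero_of_dotProduct_eq_zero G ((hpair ψ).trans hr)
    have := congrFun (hψ.symm.trans hzero) x
    simp [hxy] at this
  have hleast : IsLeast {e : ℝ | ∃ φ : V → ℝ, φ x = 1 ∧ φ y = 0 ∧ e = energyFn G φ} r⁻¹ := by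
    refine ⟨⟨fun z => r⁻¹ * (ψ z - ψ y), inv_mul_cancel₀ hr, by ring, ?_⟩, ?_⟩
    · rw [energyFn_smul_sub_const, henergy]
      field_simp
    · rintro _ ⟨θ, hx, hy, rfl⟩
      have h := energyFn_nonneg (G := G) (θ - r⁻¹ • ψ)
      rw [energyFn_sub_smul, hpair, hx, hy, henergy, sq, mul_assoc r⁻¹, inv_mul_cancel₀ hr] at h
      linarith
  rw [eres, hleast.csInf_eq, inv_inv]

lemma hitting_add_hitting (hG : G.Connected) (x y : V) :
    hitting G x y + hitting G y x = 2 * esize G * eres G x y := by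
  rcases eq_or_ne x y with rfl | hxy
  · rw [hitting_self, eres_self, add_zero, mul_zero]
  have hm : (2 * esize G : ℝ) ≠ 0 := by
    rw [← sum_degree_eq_two_mul_esize]
    have hdeg : (0 : ℝ) < G.degree x := by
      exact_mod_cast (hG.preconnected x y).degree_pos_left hxy
    exact (sum_pos' (f := fun z => (G.degree z : ℝ)) (fun _ _ => Nat.cast_nonneg _)
      ⟨x, mem_univ x, hdeg⟩).ne'
  rw [eres_eq_sub_of_lapMatrix_mulVec (ψ := (2 * esize G : ℝ)⁻¹ •
    ((fun z => hitting G z y) - fun z => hitting G z x))]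
  · simp only [Pi.smul_apply, Pi.sub_apply, smul_eq_mul, hitting_self]
    have := right_ne_zero_of_mul hm
    field_simp
    ring
  · rw [Matrix.mulVec_smul, Matrix.mulVec_sub, lapMatrix_mulVec_hitting hG,
      lapMatrix_mulVec_hitting hG, sub_sub_sub_cancel_left, smul_sub, ← Pi.single_smul,
      ← Pi.single_smul, smul_eq_mul, inv_mul_cancel₀ hm]

end EffectiveResistance

section CoverCost

variable [Fintype V] {G : SimpleGraph V}

lemma lapMatrix_mulVec_coverCost (hG : G.Connected) (x : V) :
    (G.lapMatrix ℝ *ᵥ coverCost G) x = Fintype.card V * G.degree x - 2 * esize G := by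
  have hsum : coverCost G = ∑ y, fun z => hitting G z y := by
    ext z
    rw [coverCost, Finset.sum_apply]
  rw [hsum, Matrix.mulVec_sum, Finset.sum_apply]
  simp [lapMatrix_mulVec_hitting hG, Pi.single_apply]

lemma sum_coverCost (hG : G.Connected) : ∑ x, coverCost G x = 2 * esize G * Kf G := by
  have hswap : ∑ x, ∑ y, hitting G y x = ∑ x, coverCost G x := sum_comm
  have hcommute : ∑ x, ∑ y, (hitting G x y + hitting G y x) = 2 * (2 * esize G * Kf G) := by
    simp only [hitting_add_hitting hG, ← mul_sum, Kf]
    ring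
  simp only [sum_add_distrib] at hcommute
  rw [hswap] at hcommute
  simp only [coverCost] at hcommute ⊢
  linarith

lemma coverCost_eq_of_lapMatrix_mulVec (hG : G.Connected) {ρ : V → ℝ}
    (hρ : ∀ x, (G.lapMatrix ℝ *ᵥ ρ) x = 2 * esize G / Fintype.card V - G.degree x) (x : V) :
    coverCost G x = 2 * esize G / Fintype.card V * Kf G + ∑ z, ρ z - Fintype.card V * ρ x := by
  have : Nonempty V := ⟨x⟩
  have hn : (Fintype.card V : ℝ) ≠ 0 := Nat.cast_ne_zero.2 Fintype.card_ne_zero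
  set f : V → ℝ := coverCost G + (Fintype.card V : ℝ) • ρ
  have hharmonic : G.lapMatrix ℝ *ᵥ f = 0 := by
    ext z
    rw [Matrix.mulVec_add, Matrix.mulVec_smul, Pi.add_apply, Pi.smul_apply, hρ,
      lapMatrix_mulVec_coverCost hG, smul_eq_mul, mul_sub, mul_div_cancel₀ _ hn, Pi.zero_apply]
    ring
  have hmean : ∑ z, f z = Fintype.card V * f x := by
    rw [sum_congr rfl fun z _ => eq_of_lapMatrix_mulVec_eq_zero hG hharmonic z x, sum_const,
      card_univ, nsmul_eq_mul]
  simp only [f, Pi.add_apply, Pi.smul_apply, smul_eq_mul, sum_add_distrib, ← mul_sum,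
    sum_coverCost hG] at hmean
  field_simp
  linarith

end CoverCost

section DistToSet

variable [Fintype V] {G : SimpleGraph V} {s : Set V}

lemma distToSet_le_dist (x : V) {y : V} (hy : y ∈ s) : distToSet G x s ≤ G.dist x y :=
  Nat.sInf_le ⟨y, hy, rfl⟩

lemma exists_mem_dist_eq_distToSet (hs : s.Nonempty) (x : V) :
    ∃ y ∈ s, G.dist x y = distToSet G x s :=
  Nat.sInf_mem (s := {d | ∃ y ∈ s, G.dist x y = d}) <|
    hs.elim fun y hy => ⟨_, y, hy, rfl⟩

lemma distToSet_of_mem {x : V} (hx : x ∈ s) : distToSet G x s = 0 :=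
  Nat.le_zero.1 ((distToSet_le_dist x hx).trans_eq dist_self)

lemma distToSet_le_add_one_of_adj (hG : G.Connected) (hs : s.Nonempty) {x y : V}
    (hxy : G.Adj x y) : distToSet G x s ≤ distToSet G y s + 1 := by
  obtain ⟨z, hz, hyz⟩ := exists_mem_dist_eq_distToSet (G := G) hs y
  calc distToSet G x s ≤ G.dist x z := distToSet_le_dist x hz
    _ ≤ G.dist x y + G.dist y z := hG.dist_triangle
    _ = distToSet G y s + 1 := by rw [dist_eq_one_iff_adj.2 hxy, hyz, add_comm]

lemma exists_adj_distToSet_add_one_eq (hG : G.Connected) (hs : s.Nonempty) {x : V} (hx : x ∉ s) :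
    ∃ y, G.Adj x y ∧ distToSet G y s + 1 = distToSet G x s := by
  obtain ⟨z, hz, hxz⟩ := exists_mem_dist_eq_distToSet (G := G) hs x
  obtain ⟨p, hp⟩ := hG.exists_walk_length_eq_dist x z
  cases p with
  | nil => exact absurd hz hx
  | cons hxy q =>
    refine ⟨_, hxy, le_antisymm ?_ (distToSet_le_add_one_of_adj hG hs hxy)⟩
    rw [← hxz, ← hp, Walk.length_cons]
    exact Nat.succ_le_succ ((distToSet_le_dist _ hz).trans (dist_le q))

lemma distToSet_eq_one_of_adj (hG : G.Connected) {x y : V} (hx : x ∈ s) (hy : y ∉ s)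
    (hxy : G.Adj x y) : distToSet G y s = 1 := by
  have hle := distToSet_le_add_one_of_adj hG ⟨x, hx⟩ hxy.symm
  obtain ⟨z, -, hz⟩ := exists_adj_distToSet_add_one_eq hG ⟨x, hx⟩ hy
  rw [distToSet_of_mem hx] at hle
  omega

end DistToSet

lemma deleteEdges_sym2_adj {G : SimpleGraph V} {s : Set V} {x y : V} :
    (G.deleteEdges s.sym2).Adj x y ↔ G.Adj x y ∧ (x ∈ s → y ∉ s) := by
  rw [deleteEdges_adj, Set.mk_mem_sym2_iff, not_and]

section UnicyclicCore

variable [Fintype V] {G : SimpleGraph V} {s : Set V}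

/-- The total slack at `x` in the inequalities `ρ y ≤ ρ x + 1` over the neighbours `y` of `x`, where
`ρ` is the distance to `s`. -/
noncomputable def distSlack (G : SimpleGraph V) (s : Set V) (x : V) : ℝ :=
  ∑ y ∈ G.neighborFinset x, (distToSet G x s + 1 - distToSet G y s)

lemma lapMatrix_mulVec_distToSet_add_degree (G : SimpleGraph V) (s : Set V) (x : V) :
    (G.lapMatrix ℝ *ᵥ fun z => (distToSet G z s : ℝ)) x + G.degree x = distSlack G s x := by
  simp only [distSlack, lapMatrix_mulVec_apply_eq_sum_sub, add_sub_right_comm, sum_add_distrib,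
    sum_const, card_neighborFinset_eq_degree, nsmul_eq_mul, mul_one]

lemma sum_distSlack (G : SimpleGraph V) (s : Set V) : ∑ x, distSlack G s x = 2 * esize G := by
  simp only [← lapMatrix_mulVec_distToSet_add_degree, sum_add_distrib, sum_lapMatrix_mulVec,
    sum_degree_eq_two_mul_esize, zero_add]

/-- `s` is the vertex set of the cycle of the connected unicyclic graph `G`, encoded by the
inequalities that force this: `G` has at most as many edges as vertices, and every vertex of `s` has
two distinct neighbours in `s`. -/
structure IsUnicyclicCore (G : SimpleGraph V) (s : Set V) : Prop where
  connected : G.Connected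
  nonempty : s.Nonempty
  esize_le_card : esize G ≤ Fintype.card V
  exists_two_adj : ∀ x ∈ s, ∃ y ∈ s, ∃ z ∈ s, y ≠ z ∧ G.Adj x y ∧ G.Adj x z

namespace IsUnicyclicCore

lemma distSlack_term_nonneg (h : IsUnicyclicCore G s) {x y : V} (hxy : y ∈ G.neighborFinset x) :
    (0 : ℝ) ≤ distToSet G x s + 1 - distToSet G y s := by
  have hadj := ((G.mem_neighborFinset x y).1 hxy).symm
  rw [sub_nonneg]
  exact_mod_cast distToSet_le_add_one_of_adj h.connected h.nonempty hadj

lemma card_le_distSlack (h : IsUnicyclicCore G s) {x : V} (hx : x ∈ s) {t : Finset V}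
    (ht : ∀ y ∈ t, y ∈ s ∧ G.Adj x y) : (#t : ℝ) ≤ distSlack G s x := by
  calc (#t : ℝ) = ∑ y ∈ t, (distToSet G x s + 1 - distToSet G y s : ℝ) := by
        rw [card_eq_sum_ones, Nat.cast_sum]
        refine sum_congr rfl fun y hy => ?_
        simp [distToSet_of_mem hx, distToSet_of_mem (ht y hy).1]
    _ ≤ distSlack G s x := sum_le_sum_of_subset_of_nonneg
        (fun y hy => (G.mem_neighborFinset x y).2 (ht y hy).2)
        fun y hy _ => h.distSlack_term_nonneg hy

lemma two_le_distSlack (h : IsUnicyclicCore G s) (x : V) : 2 ≤ distSlack G s x := by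
  by_cases hx : x ∈ s
  · obtain ⟨y, hy, z, hz, hyz, hxy, hxz⟩ := h.exists_two_adj x hx
    simpa [hyz] using h.card_le_distSlack hx (t := {y, z}) (by simp [hy, hz, hxy, hxz])
  · obtain ⟨y, hxy, hy⟩ := exists_adj_distToSet_add_one_eq h.connected h.nonempty hx
    calc (2 : ℝ) = distToSet G x s + 1 - distToSet G y s := by rw [← hy]; push_cast; ring
      _ ≤ distSlack G s x := single_le_sum (fun z hz => h.distSlack_term_nonneg hz)
        ((G.mem_neighborFinset x y).2 hxy)

lemma distSlack_eq_two (h : IsUnicyclicCore G s) (x : V) : distSlack G s x = 2 := by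
  have hle : ∀ z ∈ univ, 2 ≤ distSlack G s z := fun z _ => h.two_le_distSlack z
  have hsum : ∑ z, distSlack G s z ≤ ∑ _z : V, 2 := by
    rw [sum_distSlack, sum_const, card_univ, nsmul_eq_mul, mul_comm]
    exact mul_le_mul_of_nonneg_right (mod_cast h.esize_le_card) zero_le_two
  exact ((sum_eq_sum_iff_of_le hle).1 ((sum_le_sum hle).antisymm hsum) x (mem_univ x)).symm

lemma lapMatrix_mulVec_distToSet (h : IsUnicyclicCore G s) (x : V) :
    (G.lapMatrix ℝ *ᵥ fun z => (distToSet G z s : ℝ)) x = 2 - G.degree x := by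
  rw [eq_sub_iff_add_eq, lapMatrix_mulVec_distToSet_add_degree, h.distSlack_eq_two]

lemma eq_or_eq_of_adj (h : IsUnicyclicCore G s) {x y z w : V} (hx : x ∈ s) (hy : y ∈ s)
    (hz : z ∈ s) (hw : w ∈ s) (hxy : G.Adj x y) (hxz : G.Adj x z) (hxw : G.Adj x w)
    (hyz : y ≠ z) : w = y ∨ w = z := by
  by_contra! hne
  have hcard : #{w, y, z} = 3 := card_eq_three.2 ⟨w, y, z, hne.1, hne.2, hyz, rfl⟩
  have hle := h.card_le_distSlack hx (t := {w, y, z}) (by simp [hy, hz, hw, hxy, hxz, hxw])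
  rw [hcard, h.distSlack_eq_two] at hle
  norm_num at hle

-- A neighbour closer to `s` uses up the whole slack at `x`.
lemma distToSet_eq_add_one_of_adj (h : IsUnicyclicCore G s) {x y z : V} (hxy : G.Adj x y)
    (hy : distToSet G x s = distToSet G y s + 1) (hxz : G.Adj x z) (hzy : z ≠ y) :
    distToSet G z s = distToSet G x s + 1 := by
  have hadd := add_le_sum (fun w hw => h.distSlack_term_nonneg hw)
    ((G.mem_neighborFinset x y).2 hxy) ((G.mem_neighborFinset x z).2 hxz) hzy.symm
  have hle : (distToSet G x s + 1 - distToSet G y s + (distToSet G x s + 1 - distToSet G z s) : ℝ)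
      ≤ 2 := hadd.trans_eq (h.distSlack_eq_two x)
  have hlip := distToSet_le_add_one_of_adj h.connected h.nonempty hxz.symm
  refine hlip.antisymm ?_
  rify at hy ⊢
  linarith

lemma distToSet_eq_add_length (h : IsUnicyclicCore G s) {x y z : V} (hyx : G.Adj y x)
    (hx : distToSet G y s = distToSet G x s + 1) (p : G.Walk y z) (hp : p.IsPath)
    (hxp : x ∉ p.support) : distToSet G z s = distToSet G y s + p.length := by
  induction p generalizing x with
  | nil => rfl
  | @cons y w z hyw q ih =>
    rw [Walk.cons_isPath_iff] at hp
    rw [Walk.support_cons, List.mem_cons, not_or] at hxp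
    have hwx : w ≠ x := fun hwx => hxp.2 (hwx ▸ q.start_mem_support)
    have hw := h.distToSet_eq_add_one_of_adj hyx hx hyw hwx
    rw [ih hyw.symm hw hp.1 hp.2, hw, Walk.length_cons]
    ring

lemma length_eq_distToSet (h : IsUnicyclicCore G s) {v x : V} (hv : v ∈ s)
    (p : (G.deleteEdges s.sym2).Walk v x) (hp : p.IsPath) : p.length = distToSet G x s := by
  cases p with
  | nil => exact (distToSet_of_mem hv).symm
  | @cons _ y _ hvy q =>
    obtain ⟨hadj, hy⟩ := deleteEdges_sym2_adj.1 hvy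
    have hy_one := distToSet_eq_one_of_adj h.connected hv (hy hv) hadj
    have hle : G.deleteEdges s.sym2 ≤ G := deleteEdges_le _
    rw [Walk.cons_isPath_iff] at hp
    rw [h.distToSet_eq_add_length hadj.symm (by rw [hy_one, distToSet_of_mem hv]) (q.mapLe hle)
      (hp.1.mapLe hle) (by simpa using hp.2), hy_one, Walk.length_cons, Walk.length_map, add_comm]

lemma dist_deleteEdges_eq_distToSet (h : IsUnicyclicCore G s) {v x : V} (hv : v ∈ s)
    (hvx : (G.deleteEdges s.sym2).Reachable v x) :
    (G.deleteEdges s.sym2).dist v x = distToSet G x s := by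
  obtain ⟨p, hp, hlen⟩ := hvx.exists_path_of_dist
  rw [← hlen, h.length_eq_distToSet hv p hp]

lemma dist_eq_distToSet (h : IsUnicyclicCore G s) {v x : V} (hv : v ∈ s)
    (hvx : (G.deleteEdges s.sym2).Reachable v x) : G.dist x v = distToSet G x s := by
  refine le_antisymm ?_ (distToSet_le_dist x hv)
  rw [dist_comm, ← h.dist_deleteEdges_eq_distToSet hv hvx]
  exact hvx.dist_anti (deleteEdges_le _)

lemma eq_of_reachable_deleteEdges (h : IsUnicyclicCore G s) {v w : V} (hv : v ∈ s) (hw : w ∈ s)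
    (hvw : (G.deleteEdges s.sym2).Reachable v w) : v = w :=
  hvw.dist_eq_zero_iff.1 ((h.dist_deleteEdges_eq_distToSet hv hvw).trans (distToSet_of_mem hw))

lemma exists_mem_reachable_deleteEdges (h : IsUnicyclicCore G s) (x : V) :
    ∃ v ∈ s, (G.deleteEdges s.sym2).Reachable v x := by
  induction hd : distToSet G x s using Nat.strong_induction_on generalizing x with
  | _ d ih =>
    by_cases hx : x ∈ s
    · exact ⟨x, hx, .rfl⟩
    obtain ⟨y, hxy, hy⟩ := exists_adj_distToSet_add_one_eq h.connected h.nonempty hx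
    obtain ⟨v, hv, hvy⟩ := ih _ (by omega) y rfl
    exact ⟨v, hv, hvy.trans (deleteEdges_sym2_adj.2 ⟨hxy.symm, fun _ => hx⟩).reachable⟩

lemma sum_branchD {ι : Type*} [Fintype ι] {c : ι → V} (h : IsUnicyclicCore G (Set.range c))
    (hinj : Function.Injective c) :
    ∑ i, branchD (G.deleteEdges (Set.range c).sym2) (c i) =
      ∑ x, (distToSet G x (Set.range c) : ℝ) := by
  simp only [branchD]
  rw [sum_comm]
  refine sum_congr rfl fun x _ => ?_
  obtain ⟨_, ⟨i, rfl⟩, hix⟩ := h.exists_mem_reachable_deleteEdges x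
  rw [sum_eq_single_of_mem i (mem_univ i), if_pos hix, h.dist_deleteEdges_eq_distToSet ⟨i, rfl⟩ hix]
  refine fun j _ hji => if_neg fun hjx => hji (hinj ?_)
  exact h.eq_of_reachable_deleteEdges ⟨j, rfl⟩ ⟨i, rfl⟩ (hjx.trans hix.symm)

end IsUnicyclicCore

end UnicyclicCore

section Cycle

lemma fin_add_one_ne_sub_one {l : ℕ} [NeZero l] (hl : 3 ≤ l) (i : Fin l) : i + 1 ≠ i - 1 := by
  intro h
  have htwo : (1 + 1 : Fin l) = 0 := by simpa using sub_eq_zero.2 h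
  simpa [Fin.val_add, Nat.mod_eq_of_lt hl] using congrArg Fin.val htwo

lemma adj_sub_one {G : SimpleGraph V} {l : ℕ} [NeZero l] {c : Fin l → V}
    (hadj : ∀ i, G.Adj (c i) (c (i + 1))) (i : Fin l) : G.Adj (c i) (c (i - 1)) := by
  simpa using (hadj (i - 1)).symm

variable [Fintype V] {G : SimpleGraph V} {l : ℕ} [NeZero l] {c : Fin l → V}

lemma isUnicyclicCore_range (hG : G.Connected) (hsize : esize G ≤ Fintype.card V) (hl : 3 ≤ l)
    (hinj : Function.Injective c) (hadj : ∀ i, G.Adj (c i) (c (i + 1))) :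
    IsUnicyclicCore G (Set.range c) where
  connected := hG
  nonempty := Set.range_nonempty c
  esize_le_card := hsize
  exists_two_adj := by
    rintro _ ⟨i, rfl⟩
    exact ⟨_, ⟨i + 1, rfl⟩, _, ⟨i - 1, rfl⟩, hinj.ne (fin_add_one_ne_sub_one hl i), hadj i,
      adj_sub_one hadj i⟩

lemma IsUnicyclicCore.deleteEdges_cycleEdges (h : IsUnicyclicCore G (Set.range c)) (hl : 3 ≤ l)
    (hinj : Function.Injective c) (hadj : ∀ i, G.Adj (c i) (c (i + 1))) :
    G.deleteEdges (cycleEdges c) = G.deleteEdges (Set.range c).sym2 := by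
  ext x y
  simp only [deleteEdges_adj, Set.mk_mem_sym2_iff]
  refine and_congr_right fun hxy => not_congr ⟨?_, ?_⟩
  · rintro ⟨i, hi⟩
    rw [← Set.mk_mem_sym2_iff, ← hi]
    exact ⟨⟨i, rfl⟩, ⟨i + 1, rfl⟩⟩
  · rintro ⟨⟨i, rfl⟩, hy⟩
    rcases h.eq_or_eq_of_adj ⟨i, rfl⟩ ⟨i + 1, rfl⟩ ⟨i - 1, rfl⟩ hy (hadj i) (adj_sub_one hadj i) hxy
      (hinj.ne (fin_add_one_ne_sub_one hl i)) with rfl | rfl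
    · exact ⟨i, rfl⟩
    · exact ⟨i - 1, by simp [Sym2.eq_swap]⟩

end Cycle

/-- For an `n`-vertex unicyclic graph `G` with `x ∈ V(T_k)`,
`CC(x) = 2·Kf(G) + Σ_{i=1}^{l} D_{T_i}(v_i) − n·d(x,v_k)`. -/
theorem coverCost_formula [Fintype V] (G : SimpleGraph V) (n l : ℕ) [NeZero l]
    (hn : Fintype.card V = n) (hconn : G.Connected) (huni : esize G = n)
    (hl : 3 ≤ l) (c : Fin l → V) (hinj : Function.Injective c)
    (hadj : ∀ i : Fin l, G.Adj (c i) (c (i + 1)))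
    (k : Fin l) (x : V) (hx : (G.deleteEdges (cycleEdges c)).Reachable (c k) x) :
    coverCost G x = 2 * Kf G
      + (∑ i : Fin l, branchD (G.deleteEdges (cycleEdges c)) (c i))
      - (n : ℝ) * (G.dist x (c k) : ℝ) := by
  subst hn
  have hcore := isUnicyclicCore_range hconn huni.le hl hinj hadj
  have : Nonempty V := ⟨x⟩
  have hratio : (2 * esize G / Fintype.card V : ℝ) = 2 := by
    rw [huni, mul_div_cancel_right₀ _ (Nat.cast_ne_zero.2 Fintype.card_ne_zero)]
  have hCC := coverCost_eq_of_lapMatrix_mulVec hconn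
    (by simpa only [hratio] using hcore.lapMatrix_mulVec_distToSet) x
  rw [hcore.deleteEdges_cycleEdges hl hinj hadj] at hx ⊢
  rw [hCC, hratio, hcore.sum_branchD hinj, hcore.dist_eq_distToSet (Set.mem_range_self k) hx]
end
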